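/- Let X be a topological space equipped with a topological quandle structure, i.e. a continuous binary operation ∗ : X × X → X satisfying x ∗ x = x for all x, (x ∗ y) ∗ z = (x ∗ z) ∗ (y ∗ z) for all x, y, z, and such that for each x the right translation R_x : y ↦ y ∗ x is a homeomorphism of X. If X has exactly two path-connected components, then every right translation preserves each path component; that is, for all x, y ∈ X, the element x ∗ y lies in the same path component as x (and likewise x ∗⁻¹ y, the image of x under R_y⁻¹, lies in the same path component as x). In particular X is not algebraically connected. -/

import Mathlib

/-- Lemma 2.1: let `X` be a topological quandle (continuous idempotent right-distributive
operation `op`, each right translation `R x : y ↦ y ∗ x` a homeomorphism). If `X` has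
exactly two path components (witnessed by `a, b` with `¬ Joined a b` and every point
joined to `a` or `b`), then every right translation (and its inverse) preserves path
components: `x ∗ y` and `x ∗⁻¹ y` are joined to `x`. In particular, `X` is not
algebraically connected. -/
theorem two_path_components_not_algebraically_connected {X : Type*} [TopologicalSpace X]
    (op : X → X → X)
    (hcont : Continuous fun p : X × X => op p.1 p.2)
    (hidem : ∀ x : X, op x x = x)
    (hdist : ∀ x y z : X, op (op x y) z = op (op x z) (op y z))
    (R : X → X ≃ₜ X)
    (hR : ∀ x y : X, R x y = op y x)
    (a b : X) (hab : ¬ Joined a b)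
    (hcover : ∀ x : X, Joined x a ∨ Joined x b) :
    (∀ x y : X, Joined x (op x y) ∧ Joined x ((R y).symm x)) ∧
    ¬ (∀ x y : X, ∃ l : List (X × Bool),
        l.foldl (fun u p => if p.2 then op u p.1 else (R p.1).symm u) x = y) := by
  have key : ∀ x y z : X, ¬ Joined x y → ¬ Joined z y → Joined x z := by
    intro x y z h1 h2
    rcases hcover x with hx | hx <;> rcases hcover y with hy | hy <;>
      rcases hcover z with hz | hz
    · exact hx.trans hz.symm
    · exact absurd (hx.trans hy.symm) h1
    · exact hx.trans hz.symm
    · exact absurd (hz.trans hy.symm) h2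
    · exact absurd (hz.trans hy.symm) h2
    · exact hx.trans hz.symm
    · exact absurd (hx.trans hy.symm) h1
    · exact hx.trans hz.symm
  have mp : ∀ (f : X → X), Continuous f → ∀ x y : X, Joined x y → Joined (f x) (f y) := by
    intro f hf x y h
    obtain ⟨p⟩ := h
    exact ⟨p.map hf⟩
  have h1 : ∀ x y : X, Joined x (op x y) := by
    intro x y
    by_cases h : Joined x y
    · have hc : Continuous (fun u : X => op x u) :=
        hcont.comp (continuous_const.prodMk continuous_id)
      have := mp _ hc x y h
      simpa only [hidem] using this
    · refine key x y _ h ?_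
      intro h2
      apply h
      have := mp _ (R y).symm.continuous _ _ h2
      have e1 : (R y).symm (op x y) = x := by rw [← hR, Homeomorph.symm_apply_apply]
      have e2 : (R y).symm y = y := by
        rw [Homeomorph.symm_apply_eq, hR, hidem]
      rwa [e1, e2] at this
  have h2 : ∀ x y : X, Joined x ((R y).symm x) := by
    intro x y
    have := h1 ((R y).symm x) y
    rw [← hR, Homeomorph.apply_symm_apply] at this
    exact this.symm
  refine ⟨fun x y => ⟨h1 x y, h2 x y⟩, fun H => hab ?_⟩
  obtain ⟨l, hl⟩ := H a b
  rw [← hl]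
  clear hl
  have : ∀ (l : List (X × Bool)) (x : X), Joined x
      (l.foldl (fun u p => if p.2 then op u p.1 else (R p.1).symm u) x) := by
    intro l
    induction l with
    | nil => intro x; exact Joined.refl x
    | cons q t ih =>
      intro x
      rw [List.foldl_cons]
      refine Joined.trans ?_ (ih _)
      split_ifs
      · exact h1 _ _
      · exact h2 _ _
  exact this l a
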